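/- For every real s > 1, (log ζ(s))/s = ∫_2^∞ π(x) / (x (x^s − 1)) dx, where log denotes the real logarithm of the positive real ζ(s). -/

import Mathlib

/-- The prime counting function: the number of primes `≤ x`. -/
noncomputable def primePi (x : ℝ) : ℕ := Nat.primeCounting ⌊x⌋₊

/-! By the Euler product, `log ζ(s) = ∑_p -log (1 - p ^ (-s))`. Since `log (1 - x ^ (-s)) / s` is an
antiderivative of `1 / (x (x ^ s - 1))` that vanishes at infinity, the `p`-th term divided by `s`
is the integral of this function over `[p, ∞)`. Summing over `p` under the integral sign counts
every `x` once for each prime `p ≤ x`, which produces the weight `π(x)`. -/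

open Filter MeasureTheory Set Topology

section EulerProduct

theorem hasSum_primes_neg_log_one_sub {f : ℕ →*₀ ℝ} (hf : Summable f) :
    HasSum (fun p : Nat.Primes ↦ -Real.log (1 - f p)) (Real.log (∑' n, f n)) := by
  have f_lt_one (p : Nat.Primes) : f p < 1 :=
    (le_abs_self _).trans_lt (hf.norm_lt_one (f := f.toMonoidHom) p.prop.one_lt)
  have factor_pos (p : Nat.Primes) : 0 < (1 - f p)⁻¹ := inv_pos.mpr (sub_pos.mpr (f_lt_one p))
  have summable_log : Summable fun p : Nat.Primes ↦ Real.log (1 - f p)⁻¹ := by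
    have h := Real.summable_log_one_add_of_summable (hf.subtype Nat.Prime).neg
    simpa only [Real.log_inv, sub_eq_add_neg] using! h.neg
  have exp_tsum_log : Real.exp (∑' p : Nat.Primes, Real.log (1 - f p)⁻¹) = ∑' n, f n :=
    (Real.rexp_tsum_eq_tprod factor_pos summable_log).trans
      (EulerProduct.eulerProduct_completely_multiplicative_tprod hf.norm)
  rw [← exp_tsum_log, Real.log_exp]
  simpa only [Real.log_inv] using summable_log.hasSum

/-- The completely multiplicative function `n ↦ n ^ r`, to which the Euler product is applied. -/
noncomputable def natRpowHom {r : ℝ} (hr : r ≠ 0) : ℕ →*₀ ℝ where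
  toFun n := (n : ℝ) ^ r
  map_zero' := by rw [Nat.cast_zero, Real.zero_rpow hr]
  map_one' := by rw [Nat.cast_one, Real.one_rpow]
  map_mul' m n := by rw [Nat.cast_mul, Real.mul_rpow m.cast_nonneg n.cast_nonneg]

theorem natRpowHom_apply {r : ℝ} (hr : r ≠ 0) (n : ℕ) : natRpowHom hr n = (n : ℝ) ^ r := rfl

theorem hasSum_primes_neg_log_one_sub_rpow_neg {s : ℝ} (hs : 1 < s) :
    HasSum (fun p : Nat.Primes ↦ -Real.log (1 - (p : ℝ) ^ (-s)))
      (Real.log (∑' n : ℕ, ((n : ℝ) + 1) ^ (-s))) := by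
  have hs₀ : -s ≠ 0 := by linarith
  have summable_rpow : Summable (natRpowHom hs₀) := by
    simpa only [funext (natRpowHom_apply hs₀)] using Real.summable_nat_rpow.mpr (neg_lt_neg hs)
  have tsum_rpow : ∑' n, natRpowHom hs₀ n = ∑' n : ℕ, ((n : ℝ) + 1) ^ (-s) := by
    rw [summable_rpow.tsum_eq_zero_add, map_zero, zero_add]
    simp only [natRpowHom_apply, Nat.cast_add_one]
  rw [← tsum_rpow]
  simpa only [natRpowHom_apply] using hasSum_primes_neg_log_one_sub summable_rpow

end EulerProduct

section Antiderivative

variable {s a x : ℝ}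

theorem hasDerivAt_log_one_sub_rpow_neg (hx : 0 < x) (hxs : x ^ s ≠ 1) :
    HasDerivAt (fun y ↦ Real.log (1 - y ^ (-s))) (s / (x * (x ^ s - 1))) x := by
  have hpow : x ^ s ≠ 0 := (Real.rpow_pos_of_pos hx s).ne'
  have hsub : x ^ s - 1 ≠ 0 := sub_ne_zero.mpr hxs
  have one_sub : 1 - x ^ (-s) = (x ^ s - 1) / x ^ s := by
    rw [Real.rpow_neg hx.le, sub_div, div_self hpow, one_div]
  have h := ((Real.hasDerivAt_rpow_const (p := -s) (Or.inl hx.ne')).const_sub 1).log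
    (one_sub ▸ div_ne_zero hsub hpow)
  refine h.congr_deriv ?_
  rw [one_sub, Real.rpow_sub_one hx.ne', Real.rpow_neg hx.le]
  field_simp

theorem tendsto_log_one_sub_rpow_neg_atTop (hs : 0 < s) :
    Tendsto (fun x : ℝ ↦ Real.log (1 - x ^ (-s))) atTop (𝓝 0) := by
  simpa using ((tendsto_rpow_neg_atTop hs).const_sub 1).log (by simp)

theorem hasDerivAt_log_one_sub_rpow_neg_div (hs : 0 < s) (hx : 1 < x) :
    HasDerivAt (fun y ↦ Real.log (1 - y ^ (-s)) / s) (x * (x ^ s - 1))⁻¹ x := by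
  refine ((hasDerivAt_log_one_sub_rpow_neg (zero_lt_one.trans hx)
    (Real.one_lt_rpow hx hs).ne').div_const s).congr_deriv ?_
  rw [div_right_comm, div_self hs.ne', one_div]

theorem inv_mul_rpow_sub_one_nonneg (hs : 0 ≤ s) (hx : 1 ≤ x) : 0 ≤ (x * (x ^ s - 1))⁻¹ :=
  inv_nonneg.mpr (mul_nonneg (zero_le_one.trans hx) (sub_nonneg.mpr (Real.one_le_rpow hx hs)))

theorem integrableOn_Ioi_inv_mul_rpow_sub_one (hs : 0 < s) (ha : 1 < a) :
    IntegrableOn (fun x : ℝ ↦ (x * (x ^ s - 1))⁻¹) (Ioi a) :=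
  integrableOn_Ioi_deriv_of_nonneg'
    (fun _ hx ↦ hasDerivAt_log_one_sub_rpow_neg_div hs (ha.trans_le hx))
    (fun _ hx ↦ inv_mul_rpow_sub_one_nonneg hs.le (ha.trans hx).le)
    (by simpa using (tendsto_log_one_sub_rpow_neg_atTop hs).div_const s)

theorem integral_Ioi_inv_mul_rpow_sub_one (hs : 0 < s) (ha : 1 < a) :
    ∫ x in Ioi a, (x * (x ^ s - 1))⁻¹ = -Real.log (1 - a ^ (-s)) / s := by
  rw [integral_Ioi_of_hasDerivAt_of_tendsto'
    (fun x hx ↦ hasDerivAt_log_one_sub_rpow_neg_div hs (ha.trans_le hx))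
    (integrableOn_Ioi_inv_mul_rpow_sub_one hs ha)
    ((tendsto_log_one_sub_rpow_neg_atTop hs).div_const s)]
  ring

end Antiderivative

section Counting

variable {E : Type*} [NormedAddCommGroup E] [NormedSpace ℝ E]

theorem hasSum_setIntegral_card_smul {α ι : Type*} [MeasurableSpace α] [Countable ι]
    {μ : Measure α} {S : ι → Set α} {g : α → E} (hS : ∀ i, MeasurableSet (S i))
    (hg : ∀ i, IntegrableOn g (S i) μ) (hsum : Summable fun i ↦ ∫ x in S i, ‖g x‖ ∂μ) :
    HasSum (fun i ↦ ∫ x in S i, g x ∂μ) (∫ x, Nat.card {i // x ∈ S i} • g x ∂μ) := by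
  -- If `x` lies in infinitely many `S i`, both sides are `0`, as junk values of the series and of
  -- `Nat.card`.
  have tsum_indicator (x : α) : ∑' i, (S i).indicator g x = Nat.card {i // x ∈ S i} • g x :=
    calc ∑' i, (S i).indicator g x
      _ = ∑' i, {i | x ∈ S i}.indicator (fun _ ↦ g x) i := rfl
      _ = ∑' _ : {i // x ∈ S i}, g x := (tsum_subtype {i | x ∈ S i} fun _ ↦ g x).symm
      _ = Nat.card {i // x ∈ S i} • g x := tsum_const _
  have h := hasSum_integral_of_summable_integral_norm (μ := μ) (F := fun i ↦ (S i).indicator g)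
    (fun i ↦ (hg i).integrable_indicator (hS i))
    (by simpa only [norm_indicator_eq_indicator_norm, integral_indicator (hS _)] using hsum)
  simpa only [integral_indicator (hS _), tsum_indicator] using h

theorem card_primes_le_eq_primePi (x : ℝ) :
    Nat.card {p : Nat.Primes // (p : ℝ) ≤ x} = primePi x := by
  have mem_primesLE_iff (p : ℕ) : p ∈ Nat.primesLE ⌊x⌋₊ ↔ p.Prime ∧ (p : ℝ) ≤ x := by
    rw [Nat.mem_primesLE, and_comm]
    exact and_congr_right fun hp ↦ Nat.le_floor_iff' hp.ne_zero
  calc Nat.card {p : Nat.Primes // (p : ℝ) ≤ x}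
    _ = Nat.card {p : ℕ // p.Prime ∧ (p : ℝ) ≤ x} :=
      Nat.card_congr (Equiv.subtypeSubtypeEquivSubtypeInter Nat.Prime fun p ↦ (p : ℝ) ≤ x)
    _ = (Nat.primesLE ⌊x⌋₊).card := Nat.subtype_card _ mem_primesLE_iff
    _ = primePi x := Nat.primesLE_card_eq_primeCounting _

theorem primePi_eq_zero_of_lt_two {x : ℝ} (hx : x < 2) : primePi x = 0 := by
  rw [primePi, Nat.primeCounting_eq_zero_iff]
  exact Nat.lt_succ_iff.mp ((Nat.floor_lt' two_ne_zero).mpr (mod_cast hx))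

theorem hasSum_primes_integral_Ici_primePi_smul {μ : Measure ℝ} {g : ℝ → E}
    (hg : IntegrableOn g (Ici 2) μ)
    (hsum : Summable fun p : Nat.Primes ↦ ∫ x in Ici (p : ℝ), ‖g x‖ ∂μ) :
    HasSum (fun p : Nat.Primes ↦ ∫ x in Ici (p : ℝ), g x ∂μ)
      (∫ x in Ici 2, primePi x • g x ∂μ) := by
  have h := hasSum_setIntegral_card_smul (S := fun p : Nat.Primes ↦ Ici (p : ℝ))
    (fun _ ↦ measurableSet_Ici)
    (fun p ↦ hg.mono_set (Ici_subset_Ici.mpr (mod_cast p.prop.two_le))) hsum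
  simp only [mem_Ici, card_primes_le_eq_primePi] at h
  rwa [setIntegral_eq_integral_of_forall_compl_eq_zero fun x hx ↦ by
    rw [primePi_eq_zero_of_lt_two (not_le.mp hx), zero_nsmul]]

end Counting

/-- For real `s > 1`, `(log ζ(s))/s = ∫_2^∞ π(x)/(x(x^s - 1)) dx`, where `ζ(s)` is
the convergent series `∑ n^(-s)`. -/
theorem log_zeta_div_eq_integral_primePi (s : ℝ) (hs : 1 < s) :
    Real.log (∑' n : ℕ, ((n : ℝ) + 1) ^ (-s)) / s =
      ∫ x in Set.Ioi (2 : ℝ), (primePi x : ℝ) / (x * (x ^ s - 1)) := by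
  have hs₀ : 0 < s := zero_lt_one.trans hs
  have log_zeta := (hasSum_primes_neg_log_one_sub_rpow_neg hs).div_const s
  have integral_prime (p : Nat.Primes) :
      ∫ x in Ici (p : ℝ), (x * (x ^ s - 1))⁻¹ = -Real.log (1 - (p : ℝ) ^ (-s)) / s := by
    rw [integral_Ici_eq_integral_Ioi,
      integral_Ioi_inv_mul_rpow_sub_one hs₀ (mod_cast p.prop.one_lt)]
  have integral_norm_prime (p : Nat.Primes) :
      ∫ x in Ici (p : ℝ), ‖(x * (x ^ s - 1))⁻¹‖ = -Real.log (1 - (p : ℝ) ^ (-s)) / s := by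
    rw [← integral_prime]
    refine setIntegral_congr_fun measurableSet_Ici fun x hx ↦ Real.norm_of_nonneg ?_
    exact inv_mul_rpow_sub_one_nonneg hs₀.le (le_trans (mod_cast p.prop.one_le) hx)
  have sum_integrals := hasSum_primes_integral_Ici_primePi_smul
    ((integrableOn_Ioi_inv_mul_rpow_sub_one hs₀ one_lt_two).congr_set_ae Ioi_ae_eq_Ici.symm)
    (by simpa only [integral_norm_prime] using log_zeta.summable)
  simp only [integral_prime] at sum_integrals
  simpa only [nsmul_eq_mul, ← div_eq_mul_inv, integral_Ici_eq_integral_Ioi] using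
    log_zeta.unique sum_integrals
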